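/- arXiv:2510.21594 — 4 statements merged into one kernel-verified Lean document; each statement's English description precedes it below -/
import Mathlib

section
/- Let k be a field, m ≥ 0 an integer, n_0,…,n_m integers with each n_i ≥ 2, r,s ≥ 2 coprime integers, and ψ ∈ k[u] a polynomial with ψ(0) ≠ 0. Then the k-algebra R_m(n̲,ψ) = k[x_0,…,x_m,y,z,t]/(x_0^{n_0}⋯x_m^{n_m}·z + y^r + t^s + x_0·ψ(x_0⋯x_m)) is a smooth k-algebra (formally smooth and of finite presentation over k). -/
open MvPolynomial

theorem kr_smooth_of_derivation {k P : Type*} [Field k] [CommRing P] [Algebra k P]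
    [Algebra.FormallySmooth k P] (f : P) (D : Derivation k P P) (hD : D f = 1) :
    Algebra.FormallySmooth k (P ⧸ Ideal.span {f}) := by
  let π : P →ₐ[k] P ⧸ Ideal.span {f} := Ideal.Quotient.mkₐ k _
  let J := RingHom.ker π.toRingHom ^ 2
  have hf2 : ∀ p, Ideal.Quotient.mk J (f * f * p) = 0 := by
    intro p
    rw [Ideal.Quotient.eq_zero_iff_mem]
    apply Ideal.mul_mem_right
    have hf : f ∈ RingHom.ker π.toRingHom := by
      change π f = 0
      exact Ideal.Quotient.eq_zero_iff_mem.mpr (Ideal.mem_span_singleton_self f)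
    change f * f ∈ _ ^ 2
    rw [pow_two]
    exact Ideal.mul_mem_mul hf hf
  let h : P →ₐ[k] P ⧸ J := AlgHom.ofLinearMap
    { toFun := fun p => Ideal.Quotient.mk J (p - f * D p)
      map_add' := fun p q => by rw [← map_add]; congr 1; rw [map_add]; ring
      map_smul' := fun c p => by
        have : c • p - f * D (c • p) = c • (p - f * D p) := by
          rw [D.map_smul, smul_sub, mul_smul_comm]
        rw [this]; rfl }
    (by simp)
    (by
      intro p q
      change Ideal.Quotient.mk J _ = Ideal.Quotient.mk J _ * Ideal.Quotient.mk J _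
      rw [← map_mul, ← sub_eq_zero, ← map_sub, ← hf2 (-(D p * D q))]
      congr 1
      rw [D.leibniz, smul_eq_mul, smul_eq_mul]; ring)
  have hh : ∀ p, h p = Ideal.Quotient.mk J (p - f * D p) := fun p => rfl
  have hhf : h f = 0 := by rw [hh, hD]; simp
  let g : (P ⧸ Ideal.span {f}) →ₐ[k] P ⧸ J := Ideal.Quotient.liftₐ _ h (by
    intro a ha
    obtain ⟨c, rfl⟩ := Ideal.mem_span_singleton'.mp ha
    rw [map_mul, hhf, mul_zero])
  refine Algebra.FormallySmooth.of_split π g ?_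
  apply Ideal.Quotient.algHom_ext
  ext p
  change π (p - f * D p) = π p
  have : π f = 0 := Ideal.Quotient.eq_zero_iff_mem.mpr (Ideal.mem_span_singleton_self f)
  rw [map_sub, map_mul, this]; simp

theorem kr_derivation_prod {k P ι : Type*} [Field k] [CommRing P] [Algebra k P]
    (D : Derivation k P P) (s : Finset ι) (g : ι → P) (h : ∀ i, D (g i) = 0) :
    D (∏ i ∈ s, g i) = 0 := by
  classical
  induction s using Finset.induction_on with
  | empty => simp
  | insert a s ha ih => rw [Finset.prod_insert ha, D.leibniz, ih, h]; simp

theorem kr_exists_derivation {k P : Type*} [Field k] [CommRing P] [Algebra k P]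
    (Dx Dz : Derivation k P P) (x Q q y z t : P) (a r s N : ℕ) (ha : 2 ≤ a) (haN : a ≤ N)
    (h1 : Q ∣ q) (h2 : q ∣ Q ^ N)
    (hxx : Dx x = 1) (hxQ : Dx Q = 0) (hxq : Dx q = 0) (hxy : Dx y = 0) (hxz : Dx z = 0)
    (hxt : Dx t = 0) (hzx : Dz x = 0) (hzQ : Dz Q = 0) (hzq : Dz q = 0) (hzy : Dz y = 0)
    (hzz : Dz z = 1) (hzt : Dz t = 0) (ψ : Polynomial k) (hψ : Polynomial.eval 0 ψ ≠ 0) :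
    ∃ D : Derivation k P P,
      D (x ^ a * q * z + y ^ r + t ^ s + x * Polynomial.aeval (x * Q) ψ) = 1 := by
  have ez : Dz (x ^ a * q * z + y ^ r + t ^ s + x * Polynomial.aeval (x * Q) ψ) = x ^ a * q := by
    simp [Derivation.leibniz, Derivation.leibniz_pow, Derivation.map_aeval, *]
  have ex : Dx (x ^ a * q * z + y ^ r + t ^ s + x * Polynomial.aeval (x * Q) ψ) =
      a * x ^ (a - 1) * q * z + Polynomial.aeval (x * Q) ψ +
        x * Q * Polynomial.aeval (x * Q) (Polynomial.derivative ψ) := by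
    simp [Derivation.leibniz, Derivation.leibniz_pow, Derivation.map_aeval, *]
    try ring
  have hco : IsCoprime (x ^ a * q)
      (a * x ^ (a - 1) * q * z + Polynomial.aeval (x * Q) ψ +
        x * Q * Polynomial.aeval (x * Q) (Polynomial.derivative ψ)) := by
    have hd : x ^ a * q ∣ (x * Q) ^ N := by
      rw [mul_pow]; exact mul_dvd_mul (pow_dvd_pow _ haN) h2
    refine IsCoprime.of_isCoprime_of_dvd_left (IsCoprime.pow_left ?_) hd
    obtain ⟨c, hc⟩ := h1
    obtain ⟨b, rfl⟩ : ∃ b, a = b + 2 := ⟨a - 2, by omega⟩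
    have hp : Polynomial.aeval (x * Q) ψ =
        x * Q * Polynomial.aeval (x * Q) ψ.divX + algebraMap k P (ψ.coeff 0) := by
      conv_lhs => rw [← Polynomial.X_mul_divX_add ψ]
      rw [map_add, map_mul, Polynomial.aeval_X, Polynomial.aeval_C]
    have hu : algebraMap k P (ψ.coeff 0)⁻¹ * algebraMap k P (ψ.coeff 0) = 1 := by
      rw [← map_mul, inv_mul_cancel₀, map_one]
      rwa [Polynomial.coeff_zero_eq_eval_zero]
    rw [hp, hc, show b + 2 - 1 = b + 1 by omega]
    refine ⟨-algebraMap k P (ψ.coeff 0)⁻¹ * ((b + 2 : ℕ) * x ^ b * c * z +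
      Polynomial.aeval (x * Q) ψ.divX + Polynomial.aeval (x * Q) (Polynomial.derivative ψ)),
      algebraMap k P (ψ.coeff 0)⁻¹, ?_⟩
    linear_combination hu
  obtain ⟨u, v, huv⟩ := hco
  refine ⟨u • Dz + v • Dx, ?_⟩
  rw [Derivation.add_apply, Derivation.smul_apply, Derivation.smul_apply, ez, ex]
  exact huv

/-- For a field `k`, `m ≥ 0`, a multi-index `n` with each `n i ≥ 2`, coprime
integers `r, s ≥ 2` and a polynomial `ψ ∈ k[u]` with `ψ(0) ≠ 0`, the generalized
Koras–Russell algebra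
`R_m(n,ψ) = k[x_0,…,x_m,y,z,t]/(x^n z + y^r + t^s + x_0 ψ(x_0⋯x_m))`
is a smooth `k`-algebra (formally smooth and of finite presentation).
Variables: `Sum.inl i = x_i`, `Sum.inr 0 = y`, `Sum.inr 1 = z`, `Sum.inr 2 = t`. -/
theorem generalized_koras_russell_algebra_smooth
    (k : Type*) [Field k] (m : ℕ) (n : Fin (m + 1) → ℕ) (hn : ∀ i, 2 ≤ n i)
    (r s : ℕ) (hr : 2 ≤ r) (hs : 2 ≤ s) (hrs : Nat.Coprime r s)
    (ψ : Polynomial k) (hψ : Polynomial.eval 0 ψ ≠ 0) :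
    Algebra.FormallySmooth k
        (MvPolynomial (Fin (m + 1) ⊕ Fin 3) k ⧸
          Ideal.span
            {(∏ i : Fin (m + 1), (X (Sum.inl i) : MvPolynomial (Fin (m + 1) ⊕ Fin 3) k) ^ n i) *
                X (Sum.inr 1) + X (Sum.inr 0) ^ r + X (Sum.inr 2) ^ s +
                X (Sum.inl 0) * Polynomial.aeval (∏ i : Fin (m + 1), X (Sum.inl i)) ψ}) ∧
      Algebra.FinitePresentation k
        (MvPolynomial (Fin (m + 1) ⊕ Fin 3) k ⧸
          Ideal.span
            {(∏ i : Fin (m + 1), (X (Sum.inl i) : MvPolynomial (Fin (m + 1) ⊕ Fin 3) k) ^ n i) *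
                X (Sum.inr 1) + X (Sum.inr 0) ^ r + X (Sum.inr 2) ^ s +
                X (Sum.inl 0) * Polynomial.aeval (∏ i : Fin (m + 1), X (Sum.inl i)) ψ}) := by
  refine ⟨?_, Algebra.FinitePresentation.quotient ⟨{_}, by rw [Finset.coe_singleton]⟩⟩
  have hX : ∀ i j : Fin (m + 1) ⊕ Fin 3, j ≠ i →
      pderiv (R := k) i (X j) = 0 := fun i j h => pderiv_X_of_ne h
  obtain ⟨D, hD⟩ := kr_exists_derivation
    (pderiv (R := k) (Sum.inl 0 : Fin (m + 1) ⊕ Fin 3)) (pderiv (Sum.inr 1))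
    (X (Sum.inl 0)) (∏ i : Fin m, X (Sum.inl i.succ)) (∏ i : Fin m, X (Sum.inl i.succ) ^ n i.succ)
    (X (Sum.inr 0)) (X (Sum.inr 1)) (X (Sum.inr 2)) (n 0) r s (∑ i, n i) (hn 0)
    (Finset.single_le_sum (f := n) (fun _ _ => Nat.zero_le _) (Finset.mem_univ 0))
    (Finset.prod_dvd_prod_of_dvd _ _ fun i _ =>
      dvd_pow_self _ (by have := hn i.succ; omega))
    (by
      rw [← Finset.prod_pow]
      exact Finset.prod_dvd_prod_of_dvd _ _ fun i _ => pow_dvd_pow _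
        (Finset.single_le_sum (f := n) (fun _ _ => Nat.zero_le _) (Finset.mem_univ i.succ)))
    (pderiv_X_self _)
    (kr_derivation_prod _ _ _ fun i => hX _ _ (by simp [Fin.succ_ne_zero]))
    (kr_derivation_prod _ _ _ fun i => by
      rw [Derivation.leibniz_pow, hX _ _ (by simp [Fin.succ_ne_zero])]; simp)
    (hX _ _ (by simp)) (hX _ _ (by simp)) (hX _ _ (by simp)) (hX _ _ (by simp))
    (kr_derivation_prod _ _ _ fun i => hX _ _ (by simp))
    (kr_derivation_prod _ _ _ fun i => by
      rw [Derivation.leibniz_pow, hX _ _ (by simp)]; simp)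
    (hX _ _ (by simp)) (pderiv_X_self _) (hX _ _ (by simp)) ψ hψ
  apply kr_smooth_of_derivation _ D
  rw [Fin.prod_univ_succ, Fin.prod_univ_succ]
  exact hD
end

section
/- Let k be a field, m ≥ 1 an integer, n_0,…,n_m integers with each n_i ≥ 2, and r,s ≥ 2 coprime integers. Let R_m = k[x_0,…,x_m,y,z,t]/(x_0^{n_0}⋯x_m^{n_m} z + y^r + t^s + x_0), and let R_{m−1} = k[x_0,…,x_{m−1},y,z,t]/(x_0^{n_0}⋯x_{m−1}^{n_{m−1}} z + y^r + t^s + x_0) be the analogous algebra for the truncated multi-index (n_0,…,n_{m−1}). Then the localization of R_m away from the image of x_m is isomorphic as a k-algebra to the localization of the polynomial ring R_{m−1}[X] away from X (that is, to R_{m−1}[X, X^{−1}]). Equivalently, the open complement of W_m = {x_m = 0} in Spec R_m is isomorphic to (Spec R_{m−1}) × G_m. -/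
open MvPolynomial

theorem kr_exists_one {k B σ : Type*} [Field k] [CommRing B] [Algebra k B]
    (p : MvPolynomial σ k) (j : σ) (v : σ → B) (hp : aeval v p = 0) (hj : IsUnit (v j)) :
    ∃ f : Localization.Away (Ideal.Quotient.mk (Ideal.span {p}) (X j)) →ₐ[k] B,
      ∀ i, f (algebraMap (MvPolynomial σ k ⧸ Ideal.span {p}) _
        (Ideal.Quotient.mk (Ideal.span {p}) (X i))) = v i := by
  have hI : ∀ a ∈ Ideal.span {p}, aeval v a = 0 := by
    intro a ha
    obtain ⟨c, rfl⟩ := Ideal.mem_span_singleton'.1 ha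
    simp [hp]
  let f0 : (MvPolynomial σ k ⧸ Ideal.span {p}) →ₐ[k] B :=
    Ideal.Quotient.liftₐ (Ideal.span {p}) (aeval v) hI
  have h0 : ∀ i, f0 (Ideal.Quotient.mk (Ideal.span {p}) (X i)) = v i := by
    intro i
    change aeval v (X i) = v i
    simp
  refine ⟨IsLocalization.liftAlgHom
    (M := Submonoid.powers (Ideal.Quotient.mk (Ideal.span {p}) (X j))) (f := f0) ?_, ?_⟩
  · rintro ⟨_, e, rfl⟩
    simp only [map_pow, h0]
    exact hj.pow e
  · intro i
    rw [IsLocalization.liftAlgHom_apply, IsLocalization.lift_eq]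
    exact h0 i

theorem kr_ext_one {k B σ : Type*} [Field k] [CommRing B] [Algebra k B]
    (p : MvPolynomial σ k) (j : σ)
    (f g : Localization.Away (Ideal.Quotient.mk (Ideal.span {p}) (X j)) →ₐ[k] B)
    (h : ∀ i, f (algebraMap (MvPolynomial σ k ⧸ Ideal.span {p}) _
        (Ideal.Quotient.mk (Ideal.span {p}) (X i))) =
      g (algebraMap (MvPolynomial σ k ⧸ Ideal.span {p}) _
        (Ideal.Quotient.mk (Ideal.span {p}) (X i)))) : f = g := by
  apply IsLocalization.algHom_ext
    (Submonoid.powers (Ideal.Quotient.mk (Ideal.span {p}) (X j)))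
  apply Ideal.Quotient.algHom_ext
  apply MvPolynomial.algHom_ext
  exact h

theorem kr_poly_exists {k Q L : Type*} [Field k] [CommRing Q] [Algebra k Q] [CommRing L]
    [Algebra (Polynomial Q) L] [Algebra k L] [IsScalarTower k (Polynomial Q) L]
    [IsLocalization.Away (Polynomial.X : Polynomial Q) L]
    {B : Type*} [CommRing B] [Algebra k B]
    (f0 : Q →ₐ[k] B) (b : B) (hb : IsUnit b) :
    ∃ f : L →ₐ[k] B,
      (∀ a : Q, f (algebraMap (Polynomial Q) L (Polynomial.C a)) = f0 a) ∧
      f (algebraMap (Polynomial Q) L Polynomial.X) = b := by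
  let f1 : Polynomial Q →ₐ[k] B := Polynomial.eval₂AlgHom f0 b (fun a => mul_comm _ _)
  have h1 : f1 Polynomial.X = b := Polynomial.eval₂_X _ _
  have h2 : ∀ a, f1 (Polynomial.C a) = f0 a := fun a => Polynomial.eval₂_C _ _
  refine ⟨IsLocalization.liftAlgHom
    (M := Submonoid.powers (Polynomial.X : Polynomial Q)) (f := f1) ?_, ?_, ?_⟩
  · rintro ⟨_, e, rfl⟩
    simp only [map_pow, h1]
    exact hb.pow e
  · intro i
    rw [IsLocalization.liftAlgHom_apply, IsLocalization.lift_eq]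
    exact h2 _
  · rw [IsLocalization.liftAlgHom_apply, IsLocalization.lift_eq]
    exact h1

theorem kr_poly_ext {k Q L σ : Type*} [Field k] [CommRing Q] [Algebra k Q] [CommRing L]
    [Algebra (Polynomial Q) L] [Algebra k L] [IsScalarTower k (Polynomial Q) L]
    [IsLocalization.Away (Polynomial.X : Polynomial Q) L]
    {B : Type*} [CommRing B] [Algebra k B] (q : σ → Q)
    (hq : ∀ f g : Q →ₐ[k] B, (∀ i, f (q i) = g (q i)) → f = g)
    (f g : L →ₐ[k] B)
    (h : ∀ i, f (algebraMap (Polynomial Q) L (Polynomial.C (q i))) =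
      g (algebraMap (Polynomial Q) L (Polynomial.C (q i))))
    (hX : f (algebraMap (Polynomial Q) L Polynomial.X) =
      g (algebraMap (Polynomial Q) L Polynomial.X)) : f = g := by
  apply IsLocalization.algHom_ext (Submonoid.powers (Polynomial.X : Polynomial Q))
  apply Polynomial.algHom_ext'
  · exact hq _ _ h
  · exact hX

theorem kr_quot_exists {k B σ : Type*} [Field k] [CommRing B] [Algebra k B]
    (p : MvPolynomial σ k) (v : σ → B) (hp : aeval v p = 0) :
    ∃ f : (MvPolynomial σ k ⧸ Ideal.span {p}) →ₐ[k] B,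
      ∀ i, f (Ideal.Quotient.mk (Ideal.span {p}) (X i)) = v i := by
  have hI : ∀ a ∈ Ideal.span {p}, aeval v a = 0 := by
    intro a ha
    obtain ⟨c, rfl⟩ := Ideal.mem_span_singleton'.1 ha
    simp [hp]
  refine ⟨Ideal.Quotient.liftₐ (Ideal.span {p}) (aeval v) hI, fun i => ?_⟩
  change aeval v (X i) = v i
  simp

theorem kr_quot_ext {k B σ : Type*} [Field k] [CommRing B] [Algebra k B]
    (p : MvPolynomial σ k) (f g : (MvPolynomial σ k ⧸ Ideal.span {p}) →ₐ[k] B)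
    (h : ∀ i, f (Ideal.Quotient.mk (Ideal.span {p}) (X i)) =
      g (Ideal.Quotient.mk (Ideal.span {p}) (X i))) : f = g := by
  apply Ideal.Quotient.algHom_ext
  apply MvPolynomial.algHom_ext
  exact h

theorem kr_quot_rel {k σ : Type*} [Field k] (p : MvPolynomial σ k) :
    aeval (R := k) (fun i => Ideal.Quotient.mk (Ideal.span {p}) (X i)) p = 0 := by
  have : aeval (R := k) (fun i => Ideal.Quotient.mk (Ideal.span {p}) (X i)) =
      Ideal.Quotient.mkₐ k (Ideal.span {p}) := by
    apply MvPolynomial.algHom_ext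
    intro i
    rw [aeval_X]
    rfl
  rw [this]
  exact Ideal.Quotient.eq_zero_iff_mem.2 (Ideal.mem_span_singleton_self p)

theorem kr_rel_one {k σ : Type*} [Field k] (p : MvPolynomial σ k) (j : σ) :
    aeval (R := k) (fun i => algebraMap (MvPolynomial σ k ⧸ Ideal.span {p})
      (Localization.Away (Ideal.Quotient.mk (Ideal.span {p}) (X j)))
      (Ideal.Quotient.mk (Ideal.span {p}) (X i))) p = 0 := by
  let F : MvPolynomial σ k →ₐ[k]
      Localization.Away (Ideal.Quotient.mk (Ideal.span {p}) (X j)) :=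
    (IsScalarTower.toAlgHom k (MvPolynomial σ k ⧸ Ideal.span {p}) _).comp
      (Ideal.Quotient.mkₐ k (Ideal.span {p}))
  have : aeval (R := k) (fun i => algebraMap (MvPolynomial σ k ⧸ Ideal.span {p})
      (Localization.Away (Ideal.Quotient.mk (Ideal.span {p}) (X j)))
      (Ideal.Quotient.mk (Ideal.span {p}) (X i))) = F := by
    apply MvPolynomial.algHom_ext
    intro i
    rw [aeval_X]
    rfl
  rw [this]
  change algebraMap _ (Localization.Away (Ideal.Quotient.mk (Ideal.span {p}) (X j))) (Ideal.Quotient.mk (Ideal.span {p}) p) = 0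
  rw [Ideal.Quotient.eq_zero_iff_mem.2 (Ideal.mem_span_singleton_self p), map_zero]

theorem kr_abstract {k : Type*} [Field k] (L1 L2 : Type*) [CommRing L1] [Algebra k L1]
    [CommRing L2] [Algebra k L2] {m : ℕ} (n : Fin (m + 2) → ℕ) (r s : ℕ)
    (a : Fin (m + 2) ⊕ Fin 3 → L1) (c : Fin (m + 1) ⊕ Fin 3 → L2) (d : L2)
    (h1 : (∏ i : Fin (m + 2), a (Sum.inl i) ^ n i) * a (Sum.inr 1) + a (Sum.inr 0) ^ r
      + a (Sum.inr 2) ^ s + a (Sum.inl 0) = 0)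
    (h2 : (∏ i : Fin (m + 1), c (Sum.inl i) ^ n i.castSucc) * c (Sum.inr 1) + c (Sum.inr 0) ^ r
      + c (Sum.inr 2) ^ s + c (Sum.inl 0) = 0)
    (u1 : IsUnit (a (Sum.inl (Fin.last (m + 1))))) (u2 : IsUnit d)
    (e1 : ∀ v : Fin (m + 2) ⊕ Fin 3 → L2,
      (∏ i : Fin (m + 2), v (Sum.inl i) ^ n i) * v (Sum.inr 1) + v (Sum.inr 0) ^ r
      + v (Sum.inr 2) ^ s + v (Sum.inl 0) = 0 → IsUnit (v (Sum.inl (Fin.last (m + 1)))) →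
      ∃ f : L1 →ₐ[k] L2, ∀ i, f (a i) = v i)
    (e2 : ∀ (v : Fin (m + 1) ⊕ Fin 3 → L1) (b : L1),
      (∏ i : Fin (m + 1), v (Sum.inl i) ^ n i.castSucc) * v (Sum.inr 1) + v (Sum.inr 0) ^ r
      + v (Sum.inr 2) ^ s + v (Sum.inl 0) = 0 → IsUnit b →
      ∃ f : L2 →ₐ[k] L1, (∀ i, f (c i) = v i) ∧ f d = b)
    (x1 : ∀ f g : L1 →ₐ[k] L1, (∀ i, f (a i) = g (a i)) → f = g)
    (x2 : ∀ f g : L2 →ₐ[k] L2, (∀ i, f (c i) = g (c i)) → f d = g d → f = g) :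
    Nonempty (L1 ≃ₐ[k] L2) := by
  obtain ⟨w, hw⟩ := u2.exists_right_inv
  have hwn : d ^ n (Fin.last (m + 1)) * w ^ n (Fin.last (m + 1)) = 1 := by
    rw [← mul_pow, hw, one_pow]
  obtain ⟨f, hf⟩ := e1 (Sum.elim (Fin.snoc (α := fun _ => L2) (fun i => c (Sum.inl i)) d)
    ![c (Sum.inr 0), c (Sum.inr 1) * w ^ n (Fin.last (m + 1)), c (Sum.inr 2)])
    (by
      rw [Fin.prod_univ_castSucc]
      have h0 : (Fin.snoc (α := fun _ => L2) (fun i => c (Sum.inl i)) d : Fin (m + 2) → L2) 0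
          = c (Sum.inl 0) := by
        rw [← Fin.castSucc_zero, Fin.snoc_castSucc]
      simp only [Sum.elim_inl, Sum.elim_inr, Fin.snoc_castSucc, Fin.snoc_last, h0]
      simp only [Matrix.cons_val]
      linear_combination h2 + (∏ i : Fin (m + 1), c (Sum.inl i) ^ n i.castSucc) *
        c (Sum.inr 1) * hwn)
    (by simpa using u2)
  obtain ⟨g, hg, hgd⟩ := e2 (Sum.elim (fun i => a (Sum.inl i.castSucc))
    ![a (Sum.inr 0), a (Sum.inl (Fin.last (m + 1))) ^ n (Fin.last (m + 1)) * a (Sum.inr 1),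
      a (Sum.inr 2)]) (a (Sum.inl (Fin.last (m + 1))))
    (by
      rw [Fin.prod_univ_castSucc] at h1
      simp only [Sum.elim_inl, Sum.elim_inr, Fin.castSucc_zero]
      simp only [Matrix.cons_val]
      linear_combination h1) u1
  have fl (i : Fin (m + 1)) : f (a (Sum.inl i.castSucc)) = c (Sum.inl i) := by simp [hf]
  have fd : f (a (Sum.inl (Fin.last (m + 1)))) = d := by simp [hf]
  have f0 : f (a (Sum.inr 0)) = c (Sum.inr 0) := by simp [hf]
  have f1 : f (a (Sum.inr 1)) = c (Sum.inr 1) * w ^ n (Fin.last (m + 1)) := by simp [hf]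
  have f2 : f (a (Sum.inr 2)) = c (Sum.inr 2) := by simp [hf]
  have gl (i : Fin (m + 1)) : g (c (Sum.inl i)) = a (Sum.inl i.castSucc) := by simp [hg]
  have g0 : g (c (Sum.inr 0)) = a (Sum.inr 0) := by simp [hg]
  have g1 : g (c (Sum.inr 1)) =
    a (Sum.inl (Fin.last (m + 1))) ^ n (Fin.last (m + 1)) * a (Sum.inr 1) := by simp [hg]
  have g2 : g (c (Sum.inr 2)) = a (Sum.inr 2) := by simp [hg]
  have hgw := congrArg g hwn
  rw [map_mul, map_pow, map_pow, hgd, map_one] at hgw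
  refine ⟨AlgEquiv.ofAlgHom f g (x2 _ _ ?_ ?_) (x1 _ _ ?_)⟩
  · rintro (i | i)
    · simp only [AlgHom.comp_apply, AlgHom.id_apply, gl, fl]
    · fin_cases i
      · change f (g (c (Sum.inr 0))) = c (Sum.inr 0)
        rw [g0, f0]
      · change f (g (c (Sum.inr 1))) = c (Sum.inr 1)
        rw [g1, map_mul, map_pow, fd, f1]
        linear_combination c (Sum.inr 1) * hwn
      · change f (g (c (Sum.inr 2))) = c (Sum.inr 2)
        rw [g2, f2]
  · simp only [AlgHom.comp_apply, AlgHom.id_apply, hgd, fd]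
  · rintro (i | i)
    · refine Fin.lastCases ?_ (fun i => ?_) i
      · simp only [AlgHom.comp_apply, AlgHom.id_apply, hgd, fd]
      · simp only [AlgHom.comp_apply, AlgHom.id_apply, gl, fl]
    · fin_cases i
      · change g (f (a (Sum.inr 0))) = a (Sum.inr 0)
        rw [f0, g0]
      · change g (f (a (Sum.inr 1))) = a (Sum.inr 1)
        rw [f1, map_mul, map_pow, g1]
        linear_combination a (Sum.inr 1) * hgw
      · change g (f (a (Sum.inr 2))) = a (Sum.inr 2)
        rw [f2, g2]

theorem kr_abstract_two {k : Type*} [Field k] (L1 Q : Type*) [CommRing L1] [Algebra k L1]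
    [CommRing Q] [Algebra k Q] {m : ℕ} (n : Fin (m + 2) → ℕ) (r s : ℕ)
    (a : Fin (m + 2) ⊕ Fin 3 → L1) (c : Fin (m + 1) ⊕ Fin 3 → Q)
    (h1 : (∏ i : Fin (m + 2), a (Sum.inl i) ^ n i) * a (Sum.inr 1) + a (Sum.inr 0) ^ r
      + a (Sum.inr 2) ^ s + a (Sum.inl 0) = 0)
    (h2 : (∏ i : Fin (m + 1), c (Sum.inl i) ^ n i.castSucc) * c (Sum.inr 1) + c (Sum.inr 0) ^ r
      + c (Sum.inr 2) ^ s + c (Sum.inl 0) = 0)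
    (u1 : IsUnit (a (Sum.inl (Fin.last (m + 1)))))
    (e1 : ∀ v : Fin (m + 2) ⊕ Fin 3 → Localization.Away (Polynomial.X : Polynomial Q),
      (∏ i : Fin (m + 2), v (Sum.inl i) ^ n i) * v (Sum.inr 1) + v (Sum.inr 0) ^ r
      + v (Sum.inr 2) ^ s + v (Sum.inl 0) = 0 → IsUnit (v (Sum.inl (Fin.last (m + 1)))) →
      ∃ f : L1 →ₐ[k] Localization.Away (Polynomial.X : Polynomial Q), ∀ i, f (a i) = v i)
    (e2 : ∀ (v : Fin (m + 1) ⊕ Fin 3 → L1) ,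
      (∏ i : Fin (m + 1), v (Sum.inl i) ^ n i.castSucc) * v (Sum.inr 1) + v (Sum.inr 0) ^ r
      + v (Sum.inr 2) ^ s + v (Sum.inl 0) = 0 →
      ∃ f : Q →ₐ[k] L1, ∀ i, f (c i) = v i)
    (x1 : ∀ f g : L1 →ₐ[k] L1, (∀ i, f (a i) = g (a i)) → f = g)
    (x2 : ∀ f g : Q →ₐ[k] Localization.Away (Polynomial.X : Polynomial Q),
      (∀ i, f (c i) = g (c i)) → f = g) :
    Nonempty (L1 ≃ₐ[k] Localization.Away (Polynomial.X : Polynomial Q)) := by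
  refine kr_abstract L1 (Localization.Away (Polynomial.X : Polynomial Q)) n r s a
    (fun i => algebraMap (Polynomial Q) _ (Polynomial.C (c i)))
    (algebraMap (Polynomial Q) _ Polynomial.X) h1 ?_ u1
    (IsLocalization.Away.algebraMap_isUnit _) e1 ?_ x1 ?_
  · simp only [← map_pow, ← map_prod, ← map_mul, ← map_add]
    rw [h2, map_zero, map_zero]
  · intro v b hv hu
    obtain ⟨f0, hf0⟩ := e2 v hv
    obtain ⟨f, hf, hfX⟩ := kr_poly_exists (L := Localization.Away (Polynomial.X : Polynomial Q)) f0 b hu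
    exact ⟨f, fun i => (hf _).trans (hf0 i), hfX⟩
  · exact kr_poly_ext _ x2

theorem kr_final (k : Type*) [Field k] (m : ℕ) (n : Fin (m + 2) → ℕ) (r s : ℕ)
    (p : MvPolynomial (Fin (m + 2) ⊕ Fin 3) k) (q : MvPolynomial (Fin (m + 1) ⊕ Fin 3) k)
    (hp : p = (∏ i : Fin (m + 2),
    (X (Sum.inl i) : MvPolynomial (Fin (m + 2) ⊕ Fin 3) k) ^ n i) *
    X (Sum.inr 1) + X (Sum.inr 0) ^ r + X (Sum.inr 2) ^ s + X (Sum.inl 0))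
    (hq : q = (∏ i : Fin (m + 1),
    (X (Sum.inl i) : MvPolynomial (Fin (m + 1) ⊕ Fin 3) k) ^ n i.castSucc) *
    X (Sum.inr 1) + X (Sum.inr 0) ^ r + X (Sum.inr 2) ^ s + X (Sum.inl 0)) :
    Nonempty (Localization.Away
        (Ideal.Quotient.mk (Ideal.span {p}) (X (Sum.inl (Fin.last (m + 1))))) ≃ₐ[k]
      Localization.Away (Polynomial.X : Polynomial
        (MvPolynomial (Fin (m + 1) ⊕ Fin 3) k ⧸ Ideal.span {q}))) := by
  have h1 := kr_rel_one p (Sum.inl (Fin.last (m + 1)))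
  have h2 := kr_quot_rel q
  refine kr_abstract_two _ _ n r s
    (fun i => algebraMap (MvPolynomial (Fin (m + 2) ⊕ Fin 3) k ⧸ Ideal.span {p}) _
      (Ideal.Quotient.mk (Ideal.span {p}) (X i)))
    (fun i => Ideal.Quotient.mk (Ideal.span {q}) (X i)) ?_ ?_
    (IsLocalization.Away.algebraMap_isUnit _) ?_ ?_ ?_ ?_
  · refine Eq.trans ?_ h1
    refine Eq.trans ?_ (congrArg (fun a => aeval (R := k) _ a) hp).symm
    simp only [map_add, map_mul, map_prod, map_pow, aeval_X]
  · refine Eq.trans ?_ h2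
    refine Eq.trans ?_ (congrArg (fun a => aeval (R := k) _ a) hq).symm
    simp only [map_add, map_mul, map_prod, map_pow, aeval_X]
  · intro v hv hu
    refine kr_exists_one p _ v (Eq.trans ?_ hv) hu
    rw [hp]
    simp only [map_add, map_mul, map_prod, map_pow, aeval_X]
  · intro v hv
    refine kr_quot_exists q v (Eq.trans ?_ hv)
    rw [hq]
    simp only [map_add, map_mul, map_prod, map_pow, aeval_X]
  · exact kr_ext_one p _
  · exact kr_quot_ext q

/-- For a field `k`, an integer `m ≥ 1` (written `m + 1` below), a multi-index
`n` with each `n i ≥ 2` and coprime integers `r, s ≥ 2`, the localization of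
`R_m = k[x_0,…,x_m,y,z,t]/(∏ x_i^{n i} · z + y^r + t^s + x_0)` away from the
image of the last variable `x_m` is isomorphic as a `k`-algebra to
`R_{m−1}[X, X⁻¹]`, the localization of the polynomial ring `R_{m−1}[X]` away
from `X`, where `R_{m−1}` is the analogous algebra for the truncated multi-index.
Variables: `Sum.inl i = x_i`, `Sum.inr 0 = y`, `Sum.inr 1 = z`, `Sum.inr 2 = t`. -/
theorem generalized_koras_russell_localization_away_last_variable
    (k : Type*) [Field k] (m : ℕ) (n : Fin (m + 2) → ℕ) (hn : ∀ i, 2 ≤ n i)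
    (r s : ℕ) (hr : 2 ≤ r) (hs : 2 ≤ s) (hrs : Nat.Coprime r s) :
    Nonempty
      (Localization.Away
          (Ideal.Quotient.mk
            (Ideal.span
              {(∏ i : Fin (m + 2), (X (Sum.inl i) : MvPolynomial (Fin (m + 2) ⊕ Fin 3) k) ^ n i) *
                  X (Sum.inr 1) + X (Sum.inr 0) ^ r + X (Sum.inr 2) ^ s + X (Sum.inl 0)})
            (X (Sum.inl (Fin.last (m + 1)))))
        ≃ₐ[k]
        Localization.Away
          (Polynomial.X :
            Polynomial
              (MvPolynomial (Fin (m + 1) ⊕ Fin 3) k ⧸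
                Ideal.span
                  {(∏ i : Fin (m + 1),
                      (X (Sum.inl i) : MvPolynomial (Fin (m + 1) ⊕ Fin 3) k) ^ n i.castSucc) *
                      X (Sum.inr 1) + X (Sum.inr 0) ^ r + X (Sum.inr 2) ^ s + X (Sum.inl 0)}))) := by
  exact kr_final k m n r s _ _ rfl rfl
end

section
/- Let k be a field and let r,s ≥ 2 be coprime integers. Then for every integer n ≥ 1 there exist polynomials f, g ∈ k[w] such that w^n divides f(w)^r + g(w)^s + w in the polynomial ring k[w]. -/
open Polynomial in
theorem lift_aux (k : Type*) [Field k] (r : ℕ) (hr : (r : k) ≠ 0) (a c : k) (ha : a ≠ 0)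
    (h0 : a ^ r + c = 0) (n : ℕ) (hn : 1 ≤ n) :
    ∃ f : Polynomial k, f.eval 0 = a ∧ (X : Polynomial k) ^ n ∣ f ^ r + C c + X := by
  induction n, hn using Nat.le_induction with
  | base =>
    refine ⟨C a, by simp, ?_⟩
    rw [← C_pow, ← C_add, h0]
    simp
  | succ n hn ih =>
    obtain ⟨f, hf, h, hh⟩ := ih
    set t : k := -(h.eval 0) / (r * a ^ (r - 1)) with ht
    obtain ⟨q, hq⟩ := Polynomial.powAddExpansion f (C t * X ^ n) r
    have hn0 : n ≠ 0 := by omega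
    refine ⟨f + C t * X ^ n, by simp [hf, hn0], ?_⟩
    have e : (f + C t * X ^ n) ^ r + C c + X
        = X ^ n * (h + (r : k[X]) * f ^ (r - 1) * C t + q * C t ^ 2 * X ^ n) := by
      rw [hq]
      linear_combination hh
    rw [e, pow_succ]
    apply mul_dvd_mul_left
    rw [X_dvd_iff, coeff_zero_eq_eval_zero]
    have hd : (r : k) * a ^ (r - 1) ≠ 0 := mul_ne_zero hr (pow_ne_zero _ ha)
    have : (r : k) * a ^ (r - 1) * t = -(h.eval 0) := by
      rw [ht]; exact mul_div_cancel₀ _ hd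
    simp [hf, hn0, this]

theorem main_aux (k : Type*) [Field k] (r s : ℕ) (hr : (r : k) ≠ 0)
    (hrs : Nat.Coprime r s) (n : ℕ) (hn : 1 ≤ n) :
      ∃ f g : Polynomial k, (Polynomial.X : Polynomial k) ^ n ∣ f ^ r + g ^ s + Polynomial.X := by
  have : ∃ a b : k, a ≠ 0 ∧ a ^ r + b ^ s = 0 := by
    rcases Nat.even_or_odd r with h | h
    · have hs : Odd s := by
        by_contra h'
        rw [Nat.not_odd_iff_even] at h'
        have := Nat.dvd_gcd h.two_dvd h'.two_dvd
        rw [hrs] at this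
        omega
      exact ⟨1, -1, one_ne_zero, by simp [hs.neg_pow]⟩
    · exact ⟨-1, 1, by simp, by simp [h.neg_pow]⟩
  obtain ⟨a, b, ha, hab⟩ := this
  obtain ⟨f, -, hf⟩ := lift_aux k r hr a (b ^ s) ha hab n hn
  exact ⟨f, Polynomial.C b, by simpa using hf⟩

/-- For a field `k` and coprime integers `r, s ≥ 2`, for every `n ≥ 1` there
exist polynomials `f, g ∈ k[w]` such that `w^n` divides `f^r + g^s + w`. -/
theorem exists_polynomials_pow_dvd
    (k : Type*) [Field k] (r s : ℕ) (hr : 2 ≤ r) (hs : 2 ≤ s) (hrs : Nat.Coprime r s) :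
    ∀ n : ℕ, 1 ≤ n →
      ∃ f g : Polynomial k, (Polynomial.X : Polynomial k) ^ n ∣ f ^ r + g ^ s + Polynomial.X := by
  intro n hn
  by_cases h : (r : k) = 0
  · have h' : (s : k) ≠ 0 := by
      intro h'
      obtain ⟨u, v, huv⟩ := Nat.isCoprime_iff_coprime.mpr hrs
      have := congrArg (Int.cast : ℤ → k) huv
      push_cast at this
      rw [h, h'] at this
      simp at this
    obtain ⟨f, g, hfg⟩ := main_aux k s r h' hrs.symm n hn
    exact ⟨g, f, by rwa [add_comm (g ^ r)]⟩
  · exact main_aux k r s h hrs n hn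
end

section
/- Let k be an infinite perfect field, m ≥ 0 an integer, and n, r, s ≥ 2 integers with gcd(r,s) = 1. Let R = k[x_0,…,x_m,y,z,t]/((x_0⋯x_m)^n z − y^r − t^s − x_0) and let p : R → k be the k-algebra homomorphism determined by p(x_i) = 1 for all i, p(y) = 0, p(z) = 1, p(t) = 0. Then for every field extension L of k and any two k-algebra homomorphisms α, β : R → L, neither of which equals the composite of p with the inclusion k → L, there exist an integer N ≥ 1, k-algebra homomorphisms q_0,…,q_N : R → L with q_0 = α and q_N = β, and k-algebra homomorphisms h_1,…,h_N : R → L[T] such that for every 1 ≤ i ≤ N: composing h_i with evaluation at T = 0 gives q_{i−1}, composing h_i with evaluation at T = 1 gives q_i, and the ideal of L[T] generated by h_i(x_0) − 1, …, h_i(x_m) − 1, h_i(y), h_i(z) − 1, h_i(t) is the unit ideal. -/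
open MvPolynomial

/-- The ideal of the generalized Koras–Russell variety
`X_m = {(x_0⋯x_m)^n z = y^r + t^s + x_0}`.  Variables: `Sum.inl i = x_i`,
`Sum.inr 0 = y`, `Sum.inr 1 = z`, `Sum.inr 2 = t`. -/
noncomputable abbrev krIdeal (k : Type*) [Field k] (m n r s : ℕ) :
    Ideal (MvPolynomial (Fin (m + 1) ⊕ Fin 3) k) :=
  Ideal.span
    {(∏ i : Fin (m + 1), X (Sum.inl i)) ^ n * X (Sum.inr 1) -
      X (Sum.inr 0) ^ r - X (Sum.inr 2) ^ s - X (Sum.inl 0)}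

/-- The coordinate ring `R = k[x_0,…,x_m,y,z,t]/((x_0⋯x_m)^n z − y^r − t^s − x_0)`. -/
abbrev krAlg (k : Type*) [Field k] (m n r s : ℕ) : Type _ :=
  MvPolynomial (Fin (m + 1) ⊕ Fin 3) k ⧸ krIdeal k m n r s

/-- The image of the coordinate variable `v` in the coordinate ring. -/
noncomputable def krVar (k : Type*) [Field k] (m n r s : ℕ) (v : Fin (m + 1) ⊕ Fin 3) :
    krAlg k m n r s :=
  Ideal.Quotient.mk (krIdeal k m n r s) (X v)

namespace KRaux

@[ext] structure P (m : ℕ) (A : Type*) where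
  x0 : A
  xs : Fin m → A
  y : A
  z : A
  t : A

def P.map {m : ℕ} {A B : Type*} [CommRing A] [CommRing B] (f : A →+* B) (a : P m A) : P m B :=
  ⟨f a.x0, fun i => f (a.xs i), f a.y, f a.z, f a.t⟩

def E {m : ℕ} (n r s : ℕ) {A : Type*} [CommRing A] (a : P m A) : Prop :=
  (a.x0 * ∏ i, a.xs i) ^ n * a.z = a.y ^ r + a.t ^ s + a.x0

def Good {m : ℕ} {A : Type*} [CommRing A] (a : P m A) : Prop :=
  IsUnit (a.x0 - 1) ∨ (∃ j, IsUnit (a.xs j - 1)) ∨ IsUnit a.y ∨ IsUnit a.t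

lemma E.map {m n r s : ℕ} {A B : Type*} [CommRing A] [CommRing B] (f : A →+* B) {a : P m A}
    (h : E n r s a) : E n r s (a.map f) := by
  have := congrArg f h
  simpa [E, P.map] using this

lemma Good.map {m : ℕ} {A B : Type*} [CommRing A] [CommRing B] (f : A →+* B) {a : P m A}
    (h : Good a) : Good (a.map f) := by
  rcases h with h | ⟨j, h⟩ | h | h
  · exact Or.inl (by simpa [P.map] using h.map f)
  · exact Or.inr (Or.inl ⟨j, by simpa [P.map] using h.map f⟩)
  · exact Or.inr (Or.inr (Or.inl (h.map f)))
  · exact Or.inr (Or.inr (Or.inr (h.map f)))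

open Polynomial in
def Step {m : ℕ} (n r s : ℕ) {L : Type*} [Field L] (a b : P m L) : Prop :=
  ∃ c : P m L[X], E n r s c ∧ Good c ∧ c.map (evalRingHom 0) = a ∧ c.map (evalRingHom 1) = b

section
variable {m n r s : ℕ} {L : Type*} [Field L]

lemma Step.symm {a b : P m L} (h : Step n r s a b) : Step n r s b a := by
  obtain ⟨c, hc, hg, h0, h1⟩ := h
  refine ⟨c.map (Polynomial.compRingHom (1 - Polynomial.X)), hc.map _, hg.map _, ?_, ?_⟩
  · rw [← h1]; ext <;> simp [P.map, Polynomial.eval_comp]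
  · rw [← h0]; ext <;> simp [P.map, Polynomial.eval_comp]

abbrev Conn (n r s : ℕ) (a b : P m L) : Prop := Relation.ReflTransGen (Step n r s) a b

lemma Conn.symm {a b : P m L} (h : Conn n r s a b) : Conn n r s b a :=
  by
  haveI : Std.Symm (Step (m := m) (L := L) n r s) := ⟨fun _ _ h => Step.symm h⟩
  exact (Relation.ReflTransGen.stdSymm (r := Step (m := m) (L := L) n r s)).symm _ _ h

open Polynomial in
noncomputable def line (a b : L) : L[X] := Polynomial.C a + Polynomial.C (b - a) * Polynomial.X

@[simp] lemma line0 (a b : L) : (line a b).eval 0 = a := by simp [line]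
@[simp] lemma line1 (a b : L) : (line a b).eval 1 = b := by simp [line]

/-- change `z` when the product vanishes -/
lemma step_z (hn : n ≠ 0) (x0 : L) (xs : Fin m → L) (y z z' t : L)
    (h : x0 = 0 ∨ ∃ j, xs j = 0) (hE : y ^ r + t ^ s + x0 = 0) :
    Step n r s ⟨x0, xs, y, z, t⟩ ⟨x0, xs, y, z', t⟩ := by
  refine ⟨⟨.C x0, fun i => .C (xs i), .C y, line z z', .C t⟩, ?_, ?_, ?_, ?_⟩
  · have hp : x0 * ∏ i, xs i = 0 := by
      rcases h with h | ⟨j, h⟩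
      · simp [h]
      · rw [Finset.prod_eq_zero (Finset.mem_univ j) h, mul_zero]
    have h1 : (Polynomial.C x0 * ∏ i, Polynomial.C (xs i)) = Polynomial.C (x0 * ∏ i, xs i) := by
      simp
    have h2 := congrArg Polynomial.C hE
    simp only [E]
    rw [h1, hp]
    simp only [map_add, map_pow, map_zero] at h2
    simp [hn, h2]
  · rcases h with h | ⟨j, h⟩
    · left; simp [h]
    · right; left; exact ⟨j, by simp [h]⟩
  · ext <;> simp [P.map]
  · ext <;> simp [P.map]

lemma step_plane (hs : s ≠ 0) (xs : Fin m → L) :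
    Step n r s ⟨-1, xs, 1, 0, 0⟩ ⟨-1, fun _ => 1, 1, 0, 0⟩ := by
  refine ⟨⟨-1, fun i => line (xs i) 1, 1, 0, 0⟩, ?_, ?_, ?_, ?_⟩
  · simp [E, hs]
  · right; right; left; exact isUnit_one
  · ext <;> simp [P.map]
  · ext <;> simp [P.map]

lemma conn_xs_zero (hn : n ≠ 0) (hs : s ≠ 0) (a : P m L) (ha : E n r s a) (j : Fin m)
    (hj : a.xs j = 0) : Conn n r s a ⟨-1, fun _ => 1, 1, 0, 0⟩ := by
  obtain ⟨x0, xs, y, z, t⟩ := a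
  simp only at hj
  have hp : ∏ i, xs i = 0 := Finset.prod_eq_zero (Finset.mem_univ j) hj
  simp only [E, hp, mul_zero, zero_pow hn, zero_mul] at ha
  have s1 : Step n r s ⟨x0, xs, y, z, t⟩ ⟨-1, xs, 1, z, 0⟩ := by
    refine ⟨⟨-(line y 1 ^ r + line t 0 ^ s), fun i => .C (xs i), line y 1, .C z, line t 0⟩,
      ?_, ?_, ?_, ?_⟩
    · have : ∏ i, Polynomial.C (xs i) = 0 :=
        Finset.prod_eq_zero (Finset.mem_univ j) (by simp [hj])
      simp [E, this, hn]
    · right; left; exact ⟨j, by simp [hj]⟩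
    · ext <;> simp [P.map]
      linear_combination ha
    · ext <;> simp [P.map, hs]
  have s2 := step_z (r := r) (s := s) hn (-1) xs 1 z 0 0 (Or.inr ⟨j, hj⟩) (by simp [hs])
  exact ((Relation.ReflTransGen.single s1).tail s2).tail (step_plane hs xs)

lemma step_y (x0 : L) (xs : Fin m → L) (hx : x0 * ∏ i, xs i ≠ 0) (y z y' z' t : L)
    (h : E n r s ⟨x0, xs, y, z, t⟩) (h' : E n r s ⟨x0, xs, y', z', t⟩)
    (hg : t ≠ 0 ∨ x0 ≠ 1 ∨ ∃ j, xs j ≠ 1) :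
    Step n r s ⟨x0, xs, y, z, t⟩ ⟨x0, xs, y', z', t⟩ := by
  have hx' : (x0 * ∏ i, xs i) ^ n ≠ 0 := pow_ne_zero _ hx
  refine ⟨⟨.C x0, fun i => .C (xs i), line y y',
    .C (((x0 * ∏ i, xs i) ^ n)⁻¹) * (line y y' ^ r + .C t ^ s + .C x0), .C t⟩, ?_, ?_, ?_, ?_⟩
  · have h1 : (Polynomial.C x0 * ∏ i, Polynomial.C (xs i)) = Polynomial.C (x0 * ∏ i, xs i) := by
      simp
    simp only [E]
    rw [h1, ← mul_assoc, ← Polynomial.C_pow, ← Polynomial.C_mul, mul_inv_cancel₀ hx']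
    simp
  · rcases hg with h | h | ⟨j, h⟩
    · right; right; right; simpa using h
    · left
      have : (Polynomial.C x0 - 1) = Polynomial.C (x0 - 1) := by simp
      simp only [this, Polynomial.isUnit_C]
      exact (sub_ne_zero.2 h).isUnit
    · right; left; refine ⟨j, ?_⟩
      have : (Polynomial.C (xs j) - 1) = Polynomial.C (xs j - 1) := by simp
      simp only [this, Polynomial.isUnit_C]
      exact (sub_ne_zero.2 h).isUnit
  · simp only [E] at h
    ext <;> simp [P.map]
    simp only [← h]
    rw [inv_mul_cancel_left₀ hx']
  · simp only [E] at h'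
    ext <;> simp [P.map]
    simp only [← h']
    rw [inv_mul_cancel_left₀ hx']

def P.swap (a : P m L) : P m L := ⟨a.x0, a.xs, a.t, a.z, a.y⟩

lemma Step.swap {a b : P m L} (h : Step n r s a b) :
    Step n s r ⟨a.x0, a.xs, a.t, a.z, a.y⟩ ⟨b.x0, b.xs, b.t, b.z, b.y⟩ := by
  obtain ⟨c, hc, hg, rfl, rfl⟩ := h
  refine ⟨⟨c.x0, c.xs, c.t, c.z, c.y⟩, ?_, ?_, rfl, rfl⟩
  · simp only [E] at hc ⊢; rw [hc]; ring
  · simp only [Good] at hg ⊢; tauto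

lemma step_t (x0 : L) (xs : Fin m → L) (hx : x0 * ∏ i, xs i ≠ 0) (y z t z' t' : L)
    (h : E n r s ⟨x0, xs, y, z, t⟩) (h' : E n r s ⟨x0, xs, y, z', t'⟩)
    (hg : y ≠ 0 ∨ x0 ≠ 1 ∨ ∃ j, xs j ≠ 1) :
    Step n r s ⟨x0, xs, y, z, t⟩ ⟨x0, xs, y, z', t'⟩ := by
  refine (step_y (n := n) (r := s) (s := r) x0 xs hx t z t' z' y ?_ ?_ hg).swap
  · simp only [E] at h ⊢; rw [h]; ring
  · simp only [E] at h' ⊢; rw [h']; ring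

lemma exists_z (x0 : L) (xs : Fin m → L) (hx : x0 * ∏ i, xs i ≠ 0) (y t : L) :
    ∃ z, E n r s ⟨x0, xs, y, z, t⟩ := by
  have hx' : (x0 * ∏ i, xs i) ^ n ≠ 0 := pow_ne_zero _ hx
  exact ⟨((x0 * ∏ i, xs i) ^ n)⁻¹ * (y ^ r + t ^ s + x0), by
    simp only [E]; rw [mul_inv_cancel_left₀ hx']⟩

/-- normalise `(y, t)` to `(1, 0)` in a torus fibre -/
lemma conn_fibre (x0 : L) (xs : Fin m → L) (hx : x0 * ∏ i, xs i ≠ 0) (y z t z' : L)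
    (h : E n r s ⟨x0, xs, y, z, t⟩) (h' : E n r s ⟨x0, xs, 1, z', 0⟩)
    (hg : Good (⟨x0, xs, y, z, t⟩ : P m L)) :
    Conn n r s ⟨x0, xs, y, z, t⟩ ⟨x0, xs, 1, z', 0⟩ := by
  have key : ∀ y z t, E n r s ⟨x0, xs, y, z, t⟩ → (t ≠ 0 ∨ x0 ≠ 1 ∨ ∃ j, xs j ≠ 1) →
      Conn n r s ⟨x0, xs, y, z, t⟩ ⟨x0, xs, 1, z', 0⟩ := by
    intro y z t h hg
    obtain ⟨z1, h1⟩ := exists_z (n := n) (r := r) (s := s) x0 xs hx 1 t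
    exact (Relation.ReflTransGen.single (step_y x0 xs hx _ _ _ _ _ h h1 hg)).tail
      (step_t x0 xs hx _ _ _ _ _ h1 h' (Or.inl one_ne_zero))
  by_cases c : t ≠ 0 ∨ x0 ≠ 1 ∨ ∃ j, xs j ≠ 1
  · exact key y z t h c
  · push Not at c
    obtain ⟨c1, c2, c3⟩ := c
    have hy : y ≠ 0 := by
      simpa [Good, c1, c2, c3] using hg
    obtain ⟨z1, h1⟩ := exists_z (n := n) (r := r) (s := s) x0 xs hx y 1
    exact (key y z1 1 h1 (Or.inl one_ne_zero)).head
      (step_t x0 xs hx _ _ _ _ _ h h1 (Or.inl hy))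

open Polynomial in
lemma hensel (r : ℕ) (hr : (r : L) ≠ 0) (c d : L) (hc : c ≠ 0) (h : c ^ r + d = 0) (n : ℕ) :
    ∃ Y : L[X], Y.eval 0 ≠ 0 ∧ Polynomial.X ^ (n + 1) ∣ Y ^ r + Polynomial.C d + Polynomial.X := by
  induction n with
  | zero =>
    refine ⟨Polynomial.C c, by simpa using hc, ?_⟩
    have : Polynomial.C c ^ r + Polynomial.C d = 0 := by rw [← Polynomial.C_pow, ← Polynomial.C_add, h, Polynomial.C_0]
    rw [this]; simp
  | succ n ih =>
    obtain ⟨Y, hY, G, hG⟩ := ih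
    obtain ⟨q, hq⟩ := Polynomial.powAddExpansion Y
      (Polynomial.C (-(G.eval 0) / (r * Y.eval 0 ^ (r - 1))) * Polynomial.X ^ (n + 1)) r
    set e := -(G.eval 0) / (r * Y.eval 0 ^ (r - 1)) with he
    have he' : G.eval 0 + r * Y.eval 0 ^ (r - 1) * e = 0 := by
      have : (r : L) * Y.eval 0 ^ (r - 1) ≠ 0 := mul_ne_zero hr (pow_ne_zero _ hY)
      rw [he, mul_div_cancel₀ _ this]; ring
    refine ⟨Y + Polynomial.C e * Polynomial.X ^ (n + 1), by simpa using hY, ?_⟩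
    have hd : Polynomial.X ∣ G + (r : L[X]) * Y ^ (r - 1) * Polynomial.C e + q * Polynomial.C e ^ 2 * Polynomial.X ^ (n + 1) := by
      rw [Polynomial.X_dvd_iff, coeff_zero_eq_eval_zero]
      simpa using he'
    obtain ⟨K, hK⟩ := hd
    refine ⟨K, ?_⟩
    rw [hq]
    linear_combination hG + Polynomial.X ^ (n + 1) * hK

open Polynomial in
lemma hensel2 (n : ℕ) {r s : ℕ} (hrs : Nat.Coprime r s) :
    ∃ Y W : L[X], Polynomial.X ^ (n + 1) ∣ Y ^ r + W ^ s + Polynomial.X ∧ (IsUnit Y ∨ IsUnit W) := by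
  have hsgn : ∃ c d : L, c ≠ 0 ∧ d ≠ 0 ∧ c ^ r + d ^ s = 0 := by
    rcases Nat.even_or_odd r with h | h
    · rcases Nat.even_or_odd s with h' | h'
      · exfalso
        have := Nat.dvd_gcd h.two_dvd h'.two_dvd
        rw [hrs.gcd_eq_one] at this
        omega
      · exact ⟨1, -1, one_ne_zero, by simp, by simp [h'.neg_one_pow]⟩
    · exact ⟨-1, 1, by simp, one_ne_zero, by simp [h.neg_one_pow]⟩
  obtain ⟨c, d, hc, hd, hcd⟩ := hsgn
  by_cases h : (r : L) = 0
  · have h2 : (s : L) ≠ 0 := by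
      intro h2
      obtain ⟨u, v, huv⟩ := Nat.isCoprime_iff_coprime.2 hrs
      have := congrArg (Int.cast : ℤ → L) huv
      simp [h, h2] at this
    obtain ⟨W, -, hW⟩ := hensel s h2 d (c ^ r) hd (by rw [add_comm]; exact hcd) n
    refine ⟨Polynomial.C c, W, ?_, Or.inl (by simpa using hc)⟩
    rw [← Polynomial.C_pow, add_comm (Polynomial.C _)]; exact hW
  · obtain ⟨Y, -, hY⟩ := hensel r h c (d ^ s) hc hcd n
    refine ⟨Y, Polynomial.C d, ?_, Or.inr (by simpa using hd)⟩
    rw [← Polynomial.C_pow]; exact hY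

/-- the moving step -/
lemma step_move (hrs : Nat.Coprime r s) (n : ℕ) (xs : Fin m → L) (hx : ∏ i, xs i ≠ 0) :
    ∃ f g h : L → L, f 0 ^ r + g 0 ^ s = 0 ∧
      (∀ a, Good (⟨a, xs, f a, h a, g a⟩ : P m L)) ∧
      (∀ a, E (n + 1) r s ⟨a, xs, f a, h a, g a⟩) ∧
      ∀ a b, Step (n + 1) r s ⟨a, xs, f a, h a, g a⟩ ⟨b, xs, f b, h b, g b⟩ := by
  obtain ⟨Y, W, ⟨G, hG⟩, hu⟩ := hensel2 (L := L) n hrs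
  let c : P m (Polynomial L) := ⟨.X, fun i => .C (xs i), Y,
    .C (((∏ i, xs i) ^ (n + 1))⁻¹) * G, W⟩
  have hE : E (n + 1) r s c := by
    have h1 : (∏ i, Polynomial.C (xs i)) = Polynomial.C (∏ i, xs i) := by simp
    have h2 : Polynomial.C (∏ i, xs i) ^ (n + 1) *
        Polynomial.C (((∏ i, xs i) ^ (n + 1))⁻¹) = 1 := by
      rw [← Polynomial.C_pow, ← Polynomial.C_mul, mul_inv_cancel₀ (pow_ne_zero _ hx)]; simp
    simp only [E, c]
    rw [h1, hG]
    linear_combination Polynomial.X ^ (n + 1) * G * h2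
  have hgood : Good c := Or.inr (Or.inr hu)
  have hm : ∀ a, c.map (Polynomial.evalRingHom a) =
      ⟨a, xs, Y.eval a, c.z.eval a, W.eval a⟩ := by
    intro a; ext <;> simp [P.map, c]
  refine ⟨fun a => Y.eval a, fun a => W.eval a, fun a => c.z.eval a, ?_, ?_, ?_, ?_⟩
  · simpa using congrArg (Polynomial.eval 0) hG
  · intro a; rw [← hm]; exact hgood.map _
  · intro a; rw [← hm]; exact hE.map _
  · intro a b
    refine ⟨c.map (Polynomial.compRingHom (line a b)), hE.map _, hgood.map _, ?_, ?_⟩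
    · rw [← hm]; ext <;> simp [P.map, Polynomial.eval_comp]
    · rw [← hm]; ext <;> simp [P.map, Polynomial.eval_comp]

lemma step_cusp (hn : n ≠ 0) (hr : r ≠ 0) (hs : s ≠ 0) (xs : Fin m → L) (y z t : L)
    (h : y ^ r + t ^ s = 0) :
    Step n r s ⟨0, xs, 0, z, 0⟩ ⟨0, xs, y, z, t⟩ := by
  refine ⟨⟨0, fun i => .C (xs i), .C y * .X ^ s, .C z, .C t * .X ^ r⟩, ?_, ?_, ?_, ?_⟩
  · have h2 : Polynomial.C y ^ r + Polynomial.C t ^ s = 0 := by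
      rw [← Polynomial.C_pow, ← Polynomial.C_pow, ← Polynomial.C_add, h, Polynomial.C_0]
    simp only [E, zero_mul, zero_pow hn, add_zero, mul_pow, ← pow_mul, mul_comm s r]
    linear_combination -Polynomial.X ^ (r * s) * h2
  · left; simp
  · ext <;> simp [P.map, hs, hr]
  · ext <;> simp [P.map]

lemma conn_base (hn : n ≠ 0) (hr : r ≠ 0) (hs : s ≠ 0) (hrs : Nat.Coprime r s)
    (a : P m L) (ha : E n r s a) (hg : Good a) :
    Conn n r s a ⟨-1, fun _ => 1, 1, 0, 0⟩ := by
  by_cases hj : ∃ j, a.xs j = 0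
  · obtain ⟨j, hj⟩ := hj
    exact conn_xs_zero hn hs a ha j hj
  push Not at hj
  obtain ⟨x0, xs, y, z, t⟩ := a
  simp only at hj
  have hp : ∏ i, xs i ≠ 0 := Finset.prod_ne_zero_iff.2 fun i _ => hj i
  obtain ⟨n, rfl⟩ := Nat.exists_eq_succ_of_ne_zero hn
  obtain ⟨f, g, h, h0, hfg, hfE, hst⟩ := step_move hrs n xs hp
  have hend : Conn (n + 1) r s ⟨x0, xs, f x0, h x0, g x0⟩ ⟨-1, fun _ => 1, 1, 0, 0⟩ := by
    refine Relation.ReflTransGen.head (hst x0 (-1)) ?_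
    refine Relation.ReflTransGen.tail ?_ (step_plane hs xs)
    exact conn_fibre _ _ (by simpa using hp) _ _ _ _ (hfE _) (by simp [E, hs]) (hfg _)
  refine Relation.ReflTransGen.trans ?_ hend
  by_cases hx : x0 = 0
  · subst hx
    have ha' : y ^ r + t ^ s = 0 := by simpa [E] using ha.symm
    exact ((Relation.ReflTransGen.single (step_cusp hn hr hs xs y z t ha').symm).tail
      (step_cusp hn hr hs xs (f 0) z (g 0) h0)).tail
      (step_z hn 0 xs (f 0) z (h 0) (g 0) (Or.inl rfl) (by simpa using h0))
  · have hxp : x0 * ∏ i, xs i ≠ 0 := mul_ne_zero hx hp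
    obtain ⟨z', hz'⟩ := exists_z (n := n + 1) (r := r) (s := s) x0 xs hxp 1 0
    exact (conn_fibre _ _ hxp _ _ _ _ ha hz' hg).trans
      (conn_fibre _ _ hxp _ _ _ _ (hfE x0) hz' (hfg x0)).symm

end

section
variable {k : Type*} [Field k] {m n r s : ℕ}

def P.vec {A : Type*} (a : P m A) : Fin (m + 1) ⊕ Fin 3 → A :=
  Sum.elim (Fin.cons a.x0 a.xs) ![a.y, a.z, a.t]

noncomputable def mkHom {A : Type*} [CommRing A] [Algebra k A] (a : P m A) (ha : E n r s a) :
    krAlg k m n r s →ₐ[k] A :=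
  Ideal.Quotient.liftₐ (krIdeal k m n r s) (aeval a.vec) (by
    have : krIdeal k m n r s ≤ RingHom.ker (aeval (R := k) a.vec) := by
      rw [Ideal.span_le, Set.singleton_subset_iff, SetLike.mem_coe, RingHom.mem_ker]
      simp only [E] at ha
      simp [P.vec, Fin.prod_univ_succ, ha]
      ring
    exact fun x hx => this hx)

lemma mkHom_var {A : Type*} [CommRing A] [Algebra k A] (a : P m A) (ha : E n r s a) (v) :
    mkHom (k := k) a ha (krVar k m n r s v) = a.vec v := by
  simp only [mkHom, krVar]
  erw [Ideal.Quotient.liftₐ_apply, Ideal.Quotient.lift_mk]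
  simp

lemma hom_ext {A : Type*} [CommRing A] [Algebra k A] {f g : krAlg k m n r s →ₐ[k] A}
    (h : ∀ v, f (krVar k m n r s v) = g (krVar k m n r s v)) : f = g := by
  apply Ideal.Quotient.algHom_ext
  apply MvPolynomial.algHom_ext
  exact h

noncomputable def toP {A : Type*} [CommRing A] [Algebra k A] (f : krAlg k m n r s →ₐ[k] A) :
    P m A :=
  ⟨f (krVar k m n r s (Sum.inl 0)), fun i => f (krVar k m n r s (Sum.inl i.succ)),
   f (krVar k m n r s (Sum.inr 0)), f (krVar k m n r s (Sum.inr 1)),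
   f (krVar k m n r s (Sum.inr 2))⟩

lemma toP_E {A : Type*} [CommRing A] [Algebra k A] (f : krAlg k m n r s →ₐ[k] A) :
    E n r s (toP f) := by
  have h : (∏ i : Fin (m + 1), krVar k m n r s (Sum.inl i)) ^ n * krVar k m n r s (Sum.inr 1) -
      krVar k m n r s (Sum.inr 0) ^ r - krVar k m n r s (Sum.inr 2) ^ s
      - krVar k m n r s (Sum.inl 0) = 0 := by
    have := Ideal.Quotient.eq_zero_iff_mem.2 (Ideal.subset_span (Set.mem_singleton
      ((∏ i : Fin (m + 1), X (Sum.inl i)) ^ n * X (Sum.inr 1) -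
      X (Sum.inr 0) ^ r - X (Sum.inr 2) ^ s - X (Sum.inl 0) :
        MvPolynomial (Fin (m + 1) ⊕ Fin 3) k)))
    simp only [map_sub, map_mul, map_pow, map_prod] at this
    exact this
  have := congrArg f h
  simp only [map_sub, map_mul, map_pow, map_prod, map_zero, Fin.prod_univ_succ] at this
  simp only [E, toP]
  linear_combination this

lemma toP_inj {A : Type*} [CommRing A] [Algebra k A] {f g : krAlg k m n r s →ₐ[k] A}
    (h : toP f = toP g) : f = g := by
  simp only [toP, P.mk.injEq] at h
  obtain ⟨h0, h1, h2, h3, h4⟩ := h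
  apply hom_ext
  rintro (i | i)
  · refine Fin.cases h0 (fun j => congrFun h1 j) i
  · fin_cases i
    · exact h2
    · exact h3
    · exact h4

lemma toP_mkHom {A : Type*} [CommRing A] [Algebra k A] (a : P m A) (ha : E n r s a) :
    toP (mkHom (k := k) a ha) = a := by
  ext <;> simp [toP, mkHom_var, P.vec]

variable {L : Type*} [Field L] [Algebra k L]

def HStep (f g : krAlg k m n r s →ₐ[k] L) (h : krAlg k m n r s →ₐ[k] Polynomial L) : Prop :=
  ((Polynomial.aeval (0 : L)).restrictScalars k).comp h = f ∧
  ((Polynomial.aeval (1 : L)).restrictScalars k).comp h = g ∧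
  Ideal.span
    ((Set.range fun j : Fin (m + 1) => h (krVar k m n r s (Sum.inl j)) - 1) ∪
      {h (krVar k m n r s (Sum.inr 0)),
        h (krVar k m n r s (Sum.inr 1)) - 1,
        h (krVar k m n r s (Sum.inr 2))}) = ⊤

lemma hstep_of_step (f g : krAlg k m n r s →ₐ[k] L) (h : Step n r s (toP f) (toP g)) :
    ∃ h, HStep f g h := by
  obtain ⟨c, hE, hG, h0, h1⟩ := h
  obtain ⟨h, rfl⟩ : ∃ h : krAlg k m n r s →ₐ[k] Polynomial L, toP h = c :=
    ⟨mkHom c hE, toP_mkHom c hE⟩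
  refine ⟨h, ?_, ?_, ?_⟩
  · apply toP_inj; rw [← h0]; ext <;> simp [toP, P.map]
  · apply toP_inj; rw [← h1]; ext <;> simp [toP, P.map]
  · rcases hG with hu | ⟨j, hu⟩ | hu | hu
    · exact Ideal.eq_top_of_isUnit_mem _ (Ideal.subset_span (Or.inl ⟨0, rfl⟩)) hu
    · exact Ideal.eq_top_of_isUnit_mem _ (Ideal.subset_span (Or.inl ⟨j.succ, rfl⟩)) hu
    · exact Ideal.eq_top_of_isUnit_mem _ (Ideal.subset_span (Or.inr (Or.inl rfl))) hu
    · exact Ideal.eq_top_of_isUnit_mem _ (Ideal.subset_span (Or.inr (Or.inr (Or.inr rfl)))) hu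

lemma step_E {a b : P m L} (h : Step n r s a b) : E n r s b := by
  obtain ⟨c, hE, -, -, rfl⟩ := h
  exact hE.map _

lemma chain (g : krAlg k m n r s →ₐ[k] L) (a : P m L)
    (h : Relation.TransGen (Step n r s) a (toP g)) :
    ∀ f : krAlg k m n r s →ₐ[k] L, toP f = a →
    ∃ N : ℕ, 1 ≤ N ∧
      ∃ q : Fin (N + 1) → (krAlg k m n r s →ₐ[k] L),
        ∃ h : Fin N → (krAlg k m n r s →ₐ[k] Polynomial L),
          q 0 = f ∧ q (Fin.last N) = g ∧
          ∀ i : Fin N, HStep (q i.castSucc) (q i.succ) (h i) := by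
  induction h using Relation.TransGen.head_induction_on with
  | single h =>
    rintro f rfl
    obtain ⟨H, hH⟩ := hstep_of_step f g h
    refine ⟨1, le_rfl, ![f, g], ![H], rfl, rfl, ?_⟩
    intro i
    fin_cases i
    exact hH
  | head h _ ih =>
    rintro f rfl
    have hb := step_E h
    obtain ⟨N, hN, q, hh, q0, q1, hq⟩ := ih (mkHom _ hb) (toP_mkHom _ hb)
    obtain ⟨H, hH⟩ := hstep_of_step f (mkHom _ hb) (by rw [toP_mkHom]; exact h)
    refine ⟨N + 1, by omega, Fin.cons f q, Fin.cons H hh, rfl, ?_, ?_⟩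
    · rw [← Fin.succ_last, Fin.cons_succ, q1]
    · intro i
      refine Fin.cases ?_ (fun j => ?_) i
      · simpa [q0] using hH
      · simpa using hq j

lemma good_of_ne (p : krAlg k m n r s →ₐ[k] k) (hr : r ≠ 0) (hs : s ≠ 0)
    (hpx : ∀ i : Fin (m + 1), p (krVar k m n r s (Sum.inl i)) = 1)
    (hpy : p (krVar k m n r s (Sum.inr 0)) = 0)
    (hpz : p (krVar k m n r s (Sum.inr 1)) = 1)
    (hpt : p (krVar k m n r s (Sum.inr 2)) = 0)
    (f : krAlg k m n r s →ₐ[k] L) (hf : f ≠ (Algebra.ofId k L).comp p) : Good (toP f) := by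
  by_contra hg
  apply hf
  have hE := toP_E f
  simp only [Good, isUnit_iff_ne_zero, not_or, not_exists, not_not, sub_eq_zero] at hg
  obtain ⟨g1, g2, g3, g4⟩ := hg
  have g5 : (toP f).z = 1 := by
    simpa [E, g1, g2, g3, g4, hr, hs] using hE
  apply toP_inj
  ext
  · rw [g1]; simp [toP, hpx]
  · rw [g2]; simp [toP, hpx]
  · rw [g3]; simp [toP, hpy]
  · rw [g5]; simp [toP, hpz]
  · rw [g4]; simp [toP, hpt]

end

end KRaux

/-- Let `k` be an infinite perfect field, `m ≥ 0` and `n, r, s ≥ 2` with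
`gcd(r,s) = 1`.  Let `R` be the coordinate ring of
`X_m = {(x_0⋯x_m)^n z = y^r + t^s + x_0}` and `p : R → k` the `k`-point
`(1,…,1,0,1,0)`.  Then `X_m \ {p}` is `𝔸¹`-chain connected: for every field
extension `L/k`, any two `L`-points `α, β` of `X_m` different from `p` are
joined by a finite chain of elementary `𝔸¹`-homotopies `h_i : R → L[T]`
avoiding `p` (the ideal generated by `h_i(x_j) − 1`, `h_i(y)`, `h_i(z) − 1`,
`h_i(t)` is the unit ideal of `L[T]`). -/
theorem genKR_minus_point_A1_chain_connected
    (k : Type*) [Field k] [Infinite k] [PerfectField k]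
    (m n r s : ℕ) (hn : 2 ≤ n) (hr : 2 ≤ r) (hs : 2 ≤ s) (hrs : Nat.Coprime r s)
    (p : krAlg k m n r s →ₐ[k] k)
    (hpx : ∀ i : Fin (m + 1), p (krVar k m n r s (Sum.inl i)) = 1)
    (hpy : p (krVar k m n r s (Sum.inr 0)) = 0)
    (hpz : p (krVar k m n r s (Sum.inr 1)) = 1)
    (hpt : p (krVar k m n r s (Sum.inr 2)) = 0)
    (L : Type*) [Field L] [Algebra k L]
    (α β : krAlg k m n r s →ₐ[k] L)
    (hα : α ≠ (Algebra.ofId k L).comp p) (hβ : β ≠ (Algebra.ofId k L).comp p) :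
    ∃ N : ℕ, 1 ≤ N ∧
      ∃ q : Fin (N + 1) → (krAlg k m n r s →ₐ[k] L),
        ∃ h : Fin N → (krAlg k m n r s →ₐ[k] Polynomial L),
          q 0 = α ∧ q (Fin.last N) = β ∧
          ∀ i : Fin N,
            ((Polynomial.aeval (0 : L)).restrictScalars k).comp (h i) = q i.castSucc ∧
            ((Polynomial.aeval (1 : L)).restrictScalars k).comp (h i) = q i.succ ∧
            Ideal.span
              ((Set.range fun j : Fin (m + 1) => h i (krVar k m n r s (Sum.inl j)) - 1) ∪
                {h i (krVar k m n r s (Sum.inr 0)),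
                  h i (krVar k m n r s (Sum.inr 1)) - 1,
                  h i (krVar k m n r s (Sum.inr 2))}) = ⊤ := by
  have hr0 : r ≠ 0 := by omega
  have hs0 : s ≠ 0 := by omega
  have hn0 : n ≠ 0 := by omega
  have ga := KRaux.good_of_ne p hr0 hs0 hpx hpy hpz hpt α hα
  have gb := KRaux.good_of_ne p hr0 hs0 hpx hpy hpz hpt β hβ
  have ca := KRaux.conn_base hn0 hr0 hs0 hrs _ (KRaux.toP_E α) ga
  have cb := KRaux.conn_base hn0 hr0 hs0 hrs _ (KRaux.toP_E β) gb
  have h := Relation.TransGen.trans_left (Relation.TransGen.tail' ca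
    (KRaux.step_plane (n := n) (r := r) hs0 (fun _ => 1))) cb.symm
  exact KRaux.chain β _ h α rfl
end
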